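/- Let n ≥ 1 and let χ be an arbitrary Dirichlet character modulo n, and let s ∈ ℂ with Re s < 0. Then the series Σ_{k=1}^∞ τ(χ,k)·k^{s−1} converges absolutely and L(s,χ) = n^{1/2−s} · Y_±(s) · n^{−1/2} · Σ_{k=1}^∞ τ(χ,k)·k^{s−1}, where Y_± = Y_+ if χ(−1) = 1 (χ even) and Y_± = Y_− if χ(−1) = −1 (χ odd). -/

import Mathlib

open Complex

noncomputable section

/-- The Gauss sum `τ(χ,k) = Σ_{j mod n} χ(j) e(jk/n)`. -/
def tauChar (n : ℕ) (χ : DirichletCharacter ℂ n) (k : ℕ) : ℂ :=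
  ∑ j ∈ Finset.range n, χ (j : ZMod n) *
    Complex.exp (2 * Real.pi * Complex.I * j * k / n)

/-- `Y₊(s) = π^{s-1/2} Γ((1-s)/2)/Γ(s/2)`. -/
def Yplus (s : ℂ) : ℂ :=
  (Real.pi : ℂ) ^ (s - 1 / 2) * Complex.Gamma ((1 - s) / 2) / Complex.Gamma (s / 2)

/-- `Y₋(s) = -i π^{s-1/2} Γ((2-s)/2)/Γ((1+s)/2)`. -/
def Yminus (s : ℂ) : ℂ :=
  -Complex.I * (Real.pi : ℂ) ^ (s - 1 / 2) *
    Complex.Gamma ((2 - s) / 2) / Complex.Gamma ((1 + s) / 2)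

lemma tau_eq (n : ℕ) [NeZero n] (χ : DirichletCharacter ℂ n) (k : ℕ) :
    tauChar n χ k = χ (-1) * ZMod.dft (χ : ZMod n → ℂ) (k : ZMod n) := by
  have h1 : tauChar n χ k = ∑ j : ZMod n, χ j * ZMod.stdAddChar (j * (k : ZMod n)) := by
    unfold tauChar
    refine Finset.sum_nbij' (fun j => (j : ZMod n)) (fun j => j.val) ?_ ?_ ?_ ?_ ?_
    · intro j _; simp
    · intro j _; simpa using ZMod.val_lt j
    · intro j hj; exact ZMod.val_cast_of_lt (by simpa using hj)
    · intro j _; simp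
    · intro j _
      have : ((j : ZMod n) * (k : ZMod n)) = (((j * k : ℕ) : ℤ) : ZMod n) := by push_cast; rfl
      rw [this, ZMod.stdAddChar_coe]
      push_cast
      congr 2
      ring
  rw [h1, ZMod.dft_apply, Finset.mul_sum]
  refine Fintype.sum_equiv (Equiv.neg _) _ _ fun j => ?_
  have h2 : χ j = χ (-1) * χ (-j) := by rw [← map_mul]; simp
  simp only [Equiv.neg_apply, smul_eq_mul, neg_mul, neg_neg]
  rw [h2]; ring

lemma series_eq (n : ℕ) [NeZero n] (χ : DirichletCharacter ℂ n) (s : ℂ) (hs : s.re < 0) :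
    HasSum (fun k : ℕ => tauChar n χ (k + 1) * ((k + 1 : ℕ) : ℂ) ^ (s - 1))
      (χ (-1) * ZMod.LFunction (ZMod.dft (χ : ZMod n → ℂ)) (1 - s)) := by
  have hs' : 1 < (1 - s).re := by rw [sub_re, one_re]; linarith
  have h := (ZMod.LSeriesSummable_of_one_lt_re (ZMod.dft (χ : ZMod n → ℂ)) hs').LSeriesHasSum
  rw [← ZMod.LFunction_eq_LSeries _ hs'] at h
  unfold LSeriesHasSum at h
  rw [← hasSum_nat_add_iff' 1] at h
  simp only [Finset.range_one, Finset.sum_singleton, LSeries.term_zero, sub_zero] at h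
  refine (h.mul_left (χ (-1))).congr_fun ?_
  intro k
  rw [tau_eq, LSeries.term_of_ne_zero (by omega), mul_assoc, div_eq_mul_inv, ← Complex.cpow_neg,
    neg_sub]

lemma Yplus_eq (s : ℂ) : Yplus s = Gammaℝ (1 - s) / Gammaℝ s := by
  have hp : (Real.pi : ℂ) ≠ 0 := by exact_mod_cast Real.pi_ne_zero
  rw [Yplus, Gammaℝ_def, Gammaℝ_def, show s - 1 / 2 = -(1 - s) / 2 - (-s / 2) by ring,
    Complex.cpow_sub _ _ hp]
  rw [div_mul_eq_mul_div, div_div]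

lemma Yminus_eq (s : ℂ) : Yminus s = -I * (Gammaℝ (2 - s) / Gammaℝ (1 + s)) := by
  have hp : (Real.pi : ℂ) ≠ 0 := by exact_mod_cast Real.pi_ne_zero
  rw [Yminus, Gammaℝ_def, Gammaℝ_def, show s - 1 / 2 = -(2 - s) / 2 - (-(1 + s) / 2) by ring,
    Complex.cpow_sub _ _ hp]
  rw [mul_assoc, mul_div_assoc, div_mul_eq_mul_div, div_div]

lemma dft_even (n : ℕ) [NeZero n] (χ : DirichletCharacter ℂ n) (hχ : χ.Even) :
    (ZMod.dft (χ : ZMod n → ℂ)).Even := ZMod.dft_even_iff.mpr hχ.to_fun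

lemma dft_odd (n : ℕ) [NeZero n] (χ : DirichletCharacter ℂ n) (hχ : χ.Odd) :
    (ZMod.dft (χ : ZMod n → ℂ)).Odd := ZMod.dft_odd_iff.mpr hχ.to_fun

/-- the functional equation for the `L`-function of an arbitrary (not necessarily
primitive) Dirichlet character `χ` mod `n`, relating `L(s,χ)` to the Dirichlet series
`K(1-s,χ) = n^{-1/2} Σ_k τ(χ,k) k^{s-1}`, valid for `Re s < 0`. -/
theorem statement6
    (n : ℕ) (hn : 1 ≤ n) (χ : DirichletCharacter ℂ n)
    (s : ℂ) (hs : s.re < 0) :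
    haveI : NeZero n := ⟨by omega⟩
    Summable (fun k : ℕ => ‖tauChar n χ (k + 1) * ((k + 1 : ℕ) : ℂ) ^ (s - 1)‖) ∧
    χ.LFunction s =
      (n : ℂ) ^ (1 / 2 - s) * (if χ (-1) = 1 then Yplus s else Yminus s) *
        (n : ℂ) ^ (-(1 : ℂ) / 2) *
        ∑' k : ℕ, tauChar n χ (k + 1) * ((k + 1 : ℕ) : ℂ) ^ (s - 1) := by
  haveI : NeZero n := ⟨by omega⟩
  have H := series_eq n χ s hs
  refine ⟨H.summable.norm, ?_⟩
  rw [H.tsum_eq]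
  have hn0 : (n : ℂ) ≠ 0 := NeZero.ne _
  have hs0 : s ≠ 0 := by rintro rfl; simp at hs
  have hs1 : 1 - s ≠ 0 := by
    intro h
    have := congrArg Complex.re h
    simp at this; linarith
  have hnn : (n : ℂ) ^ (1 / 2 - s) * (n : ℂ) ^ (-(1 : ℂ) / 2) = (n : ℂ) ^ (-s) := by
    rw [← Complex.cpow_add _ _ hn0]; congr 1; ring
  rw [mul_right_comm ((n : ℂ) ^ (1 / 2 - s)), hnn]
  change ZMod.LFunction χ s = _
  rcases χ.even_or_odd with hχ | hχ
  · have h1 : χ (-1) = 1 := hχ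
    rw [if_pos h1, h1, one_mul, Yplus_eq,
      ZMod.LFunction_eq_completed_div_gammaFactor_even hχ.to_fun s (.inl hs0),
      ZMod.LFunction_eq_completed_div_gammaFactor_even (dft_even n χ hχ) (1 - s) (.inl hs1)]
    have hF := ZMod.completedLFunction_one_sub_even hχ.to_fun (1 - s) (.inl hs1)
      (.inl (by simpa using hs0))
    rw [sub_sub_cancel, show 1 - s - 1 = -s by ring] at hF
    rw [hF]
    have hG : Gammaℝ (1 - s) ≠ 0 := Gammaℝ_ne_zero_of_re_pos (by simp; linarith)
    rw [mul_assoc, div_mul_div_comm, mul_comm (Gammaℝ s), mul_div_mul_left _ _ hG, mul_div_assoc]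
  · have h1 : χ (-1) = -1 := hχ
    have h2 : ¬ ((-1 : ℂ) = 1) := by norm_num
    rw [h1, if_neg h2, Yminus_eq,
      ZMod.LFunction_eq_completed_div_gammaFactor_odd hχ.to_fun s,
      ZMod.LFunction_eq_completed_div_gammaFactor_odd (dft_odd n χ hχ) (1 - s)]
    have hF := ZMod.completedLFunction_one_sub_odd hχ.to_fun (1 - s)
    rw [sub_sub_cancel, show 1 - s - 1 = -s by ring] at hF
    rw [hF, show 1 - s + 1 = 2 - s by ring, add_comm s 1]
    have hG : Gammaℝ (2 - s) ≠ 0 := Gammaℝ_ne_zero_of_re_pos (by simp; linarith)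
    generalize ZMod.completedLFunction (ZMod.dft (χ : ZMod n → ℂ)) (1 - s) = A
    have : A / Gammaℝ (1 + s) = Gammaℝ (2 - s) / Gammaℝ (1 + s) * (A / Gammaℝ (2 - s)) := by
      rw [div_mul_div_comm, mul_comm (Gammaℝ (1 + s)), mul_div_mul_left _ _ hG]
    rw [mul_div_assoc, this]
    ring
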